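/- For any admissible set A of addition chains, both 𝒟^A = {δ^A(n) : n a positive integer} and the set 𝒟^A_st of A-stable defects are well-ordered subsets of the real numbers, each of order type exactly ω^ω. -/

import Mathlib

/-- `c` is an addition chain: a nonempty list of positive integers starting at `1`
such that every later entry is the sum of two (not necessarily distinct) earlier entries. -/
def IsAdditionChain (c : List ℕ) : Prop :=
  c.getD 0 0 = 1 ∧
    ∀ k, 0 < k → k < c.length →
      ∃ i j, i < k ∧ j < k ∧ c.getD k 0 = c.getD i 0 + c.getD j 0

/-- `c` is an addition chain whose last entry is `n`; its length is `c.length - 1`. -/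
def IsAdditionChainFor (c : List ℕ) (n : ℕ) : Prop :=
  IsAdditionChain c ∧ c.getD (c.length - 1) 0 = n

/-- ν₂(n): the number of 1's in the binary expansion of `n`. -/
def binaryWeight (n : ℕ) : ℕ := (Nat.digits 2 n).sum

/-- `ℓ^A(n)`: the least length (number of steps, i.e. one less than the number of
entries) of an addition chain for `n` belonging to the set `A` of addition chains. -/
noncomputable def chainLength (A : Set (List ℕ)) (n : ℕ) : ℕ :=
  sInf {r | ∃ c ∈ A, IsAdditionChainFor c n ∧ c.length = r + 1}

/-- A set `A` of addition chains is admissible if (i) every positive `n` has a chain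
in `A` of length at most `⌊log₂ n⌋ + ν₂(n) - 1` (i.e. with at most
`⌊log₂ n⌋ + ν₂(n)` entries) and (ii) `ℓ^A(2n) ≤ ℓ^A(n) + 1` for all positive `n`. -/
def Admissible (A : Set (List ℕ)) : Prop :=
  (∀ n : ℕ, 0 < n → ∃ c ∈ A, IsAdditionChainFor c n ∧
      c.length ≤ Nat.log 2 n + binaryWeight n) ∧
  ∀ n : ℕ, 0 < n → chainLength A (2 * n) ≤ chainLength A n + 1

/-- The A-defect `δ^A(n) = ℓ^A(n) - log₂ n`. -/
noncomputable def Adefect (A : Set (List ℕ)) (n : ℕ) : ℝ :=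
  (chainLength A n : ℝ) - Real.logb 2 n

/-- `m` is A-stable if `ℓ^A(2^k m) = ℓ^A(m) + k` for all `k ≥ 0`. -/
def AStable (A : Set (List ℕ)) (m : ℕ) : Prop :=
  ∀ k : ℕ, chainLength A (2 ^ k * m) = chainLength A m + k

/-- `𝒟^A`: the set of all A-defect values. -/
def defectSet (A : Set (List ℕ)) : Set ℝ :=
  {d | ∃ n : ℕ, 0 < n ∧ d = Adefect A n}

/-- `𝒟^A_st`: the set of all A-stable defects. -/
def stableDefectSet (A : Set (List ℕ)) : Set ℝ :=
  {d | ∃ n : ℕ, 0 < n ∧ AStable A n ∧ d = Adefect A n}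

open scoped Classical in
/-- The order type of a well-ordered subset `S` of a linear order
(junk value `0` if `S` is not well-ordered, i.e. not `Set.IsWF`). -/
noncomputable def setOrderType {X : Type*} [LinearOrder X] (S : Set X) : Ordinal :=
  if h : S.IsWF then
    letI : WellFoundedLT S := ⟨h⟩
    Ordinal.type ((· < ·) : S → S → Prop)
  else 0


/-! ### Binary weight -/

theorem bw_zero : binaryWeight 0 = 0 := by simp [binaryWeight]

theorem bw_two_mul (n : ℕ) : binaryWeight (2 * n) = binaryWeight n := by
  unfold binaryWeight
  rcases Nat.eq_zero_or_pos n with h | h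
  · simp [h]
  · rw [Nat.digits_def' (by norm_num) (by omega)]
    simp

theorem bw_two_mul_add_one (n : ℕ) : binaryWeight (2 * n + 1) = binaryWeight n + 1 := by
  unfold binaryWeight
  rw [Nat.digits_def' (by norm_num) (by omega)]
  have h1 : (2 * n + 1) % 2 = 1 := by omega
  have h2 : (2 * n + 1) / 2 = n := by omega
  rw [h1, h2, List.sum_cons, add_comm]

theorem bw_two_pow_mul (k n : ℕ) : binaryWeight (2 ^ k * n) = binaryWeight n := by
  induction k with
  | zero => simp
  | succ k ih => rw [pow_succ', mul_assoc, bw_two_mul, ih]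

theorem bw_one : binaryWeight 1 = 1 := by simpa [bw_zero] using bw_two_mul_add_one 0

theorem bw_succ_le (n : ℕ) : binaryWeight (n + 1) ≤ binaryWeight n + 1 := by
  induction n using Nat.strong_induction_on with
  | _ n ih =>
    rcases Nat.even_or_odd' n with ⟨m, rfl | rfl⟩
    · rw [bw_two_mul_add_one, bw_two_mul]
    · rw [bw_two_mul_add_one, show 2 * m + 1 + 1 = 2 * (m + 1) by ring, bw_two_mul]
      have := ih m (by omega)
      omega

theorem bw_add_le (a b : ℕ) : binaryWeight (a + b) ≤ binaryWeight a + binaryWeight b := by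
  induction a using Nat.strong_induction_on generalizing b with
  | _ a ih =>
    rcases Nat.eq_zero_or_pos a with h | h
    · simp [h]
    rcases Nat.even_or_odd' a with ⟨m, rfl | rfl⟩ <;>
    rcases Nat.even_or_odd' b with ⟨l, rfl | rfl⟩ <;>
    have h1 := ih m (by omega) l
    · rw [← mul_add, bw_two_mul, bw_two_mul, bw_two_mul]; exact h1
    · rw [← add_assoc, ← mul_add, bw_two_mul_add_one, bw_two_mul, bw_two_mul_add_one]; omega
    · rw [show 2 * m + 1 + 2 * l = 2 * (m + l) + 1 by ring, bw_two_mul_add_one, bw_two_mul,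
        bw_two_mul_add_one]; omega
    · rw [show 2 * m + 1 + (2 * l + 1) = 2 * (m + l + 1) by ring, bw_two_mul,
        bw_two_mul_add_one, bw_two_mul_add_one]
      have := bw_succ_le (m + l)
      omega

theorem bw_two_pow (k : ℕ) : binaryWeight (2 ^ k) = 1 := by
  simpa [bw_one] using bw_two_pow_mul k 1

theorem exists_top (n : ℕ) (hn : 0 < n) :
    ∃ a t, n = 2 ^ a + t ∧ t < 2 ^ a ∧ binaryWeight t + 1 = binaryWeight n := by
  induction n using Nat.strong_induction_on with
  | _ n ih =>
    rcases Nat.even_or_odd' n with ⟨m, rfl | rfl⟩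
    · obtain ⟨a, t, h1, h2, h3⟩ := ih m (by omega) (by omega)
      refine ⟨a + 1, 2 * t, ?_, ?_, ?_⟩
      · rw [pow_succ]; omega
      · rw [pow_succ]; omega
      · rw [bw_two_mul, bw_two_mul, h3]
    · rcases Nat.eq_zero_or_pos m with h | h
      · subst h
        exact ⟨0, 0, by norm_num, by norm_num, by simp [bw_zero, bw_one]⟩
      · obtain ⟨a, t, h1, h2, h3⟩ := ih m (by omega) h
        refine ⟨a + 1, 2 * t + 1, ?_, ?_, ?_⟩
        · rw [pow_succ]; omega
        · rw [pow_succ]; omega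
        · rw [bw_two_mul_add_one, bw_two_mul_add_one, h3]

/-! ### Chains of small defect have small binary weight -/

theorem chain_aux (a : ℕ → ℕ) (r : ℕ) (h0 : a 0 = 1)
    (hs : ∀ k, 0 < k → k ≤ r → ∃ i j, i < k ∧ j < k ∧ a k = a i + a j) :
    ∀ k, k ≤ r → ∃ N0 N1 : ℕ, (N1 = N0 ∨ N1 = N0 + 1) ∧
      (∀ i, i < k → (a i : ℝ) * 2 ≤ 2 ^ k * (7 / 8 : ℝ) ^ N0) ∧
      (∀ i, i ≤ k → (a i : ℝ) ≤ 2 ^ k * (7 / 8 : ℝ) ^ N1) ∧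
      (∀ i, i ≤ k → binaryWeight (a i) ≤ 2 ^ N1) := by
  intro k
  induction k with
  | zero =>
    intro _
    refine ⟨0, 0, Or.inl rfl, by simp, ?_, ?_⟩
    · intro i hi
      obtain rfl : i = 0 := by omega
      simp [h0]
    · intro i hi
      obtain rfl : i = 0 := by omega
      simp [h0, bw_one]
  | succ k ih =>
    intro hk
    obtain ⟨N0, N1, hN, hA, hB, hC⟩ := ih (by omega)
    obtain ⟨i, j, hi, hj, hij⟩ := hs (k + 1) (by omega) hk
    have hprev : ∀ i, i < k + 1 → (a i : ℝ) * 2 ≤ 2 ^ (k + 1) * (7 / 8 : ℝ) ^ N1 := by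
      intro l hl
      have := hB l (by omega)
      rw [pow_succ]; linarith
    have hcast : (a (k + 1) : ℝ) = a i + a j := by rw [hij]; push_cast; ring
    have hpos1 : (0 : ℝ) < 2 ^ (k + 1) * (7 / 8 : ℝ) ^ N1 := by positivity
    by_cases hne : i = j
    · subst hne
      refine ⟨N1, N1, Or.inl rfl, hprev, ?_, ?_⟩
      · intro l hl
        rcases Nat.lt_or_ge l (k + 1) with h | h
        · have := hprev l h
          have : (0 : ℝ) ≤ a l := by positivity
          linarith
        · obtain rfl : l = k + 1 := by omega
          have := hprev i hi
          linarith
      · intro l hl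
        rcases Nat.lt_or_ge l (k + 1) with h | h
        · exact hC l (by omega)
        · obtain rfl : l = k + 1 := by omega
          rw [hij, ← two_mul, bw_two_mul]
          exact hC i (by omega)
    · refine ⟨N1, N1 + 1, Or.inr rfl, hprev, ?_, ?_⟩
      · intro l hl
        rcases Nat.lt_or_ge l (k + 1) with h | h
        · have := hprev l h
          rw [pow_succ (7 / 8 : ℝ), ← mul_assoc]
          linarith
        · obtain rfl : l = k + 1 := by omega
          have hu : (7 / 8 : ℝ) ^ N1 ≤ (7 / 8 : ℝ) ^ N0 :=
            pow_le_pow_of_le_one (by norm_num) (by norm_num) (by omega)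
          have hu' : (7 / 8 : ℝ) ^ N0 * (7 / 8) ≤ (7 / 8 : ℝ) ^ N1 := by
            rcases hN with h | h
            · rw [h]
              have : (0 : ℝ) < (7 / 8 : ℝ) ^ N0 := by positivity
              linarith
            · rw [h, pow_succ]
          have hX : (2 : ℝ) ^ k * (7 / 8 : ℝ) ^ N1 ≤ 2 ^ k * (7 / 8 : ℝ) ^ N0 := by gcongr
          have hY : (2 : ℝ) ^ k * ((7 / 8 : ℝ) ^ N0 * (7 / 8)) ≤ 2 ^ k * (7 / 8 : ℝ) ^ N1 := by
            gcongr
          have hZ : (0 : ℝ) < 2 ^ k * (7 / 8 : ℝ) ^ N0 := by positivity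
          have key : (a i : ℝ) + a j ≤ (3 / 2) * (2 ^ k * (7 / 8 : ℝ) ^ N0) := by
            rcases Nat.lt_or_ge i j with h' | h'
            · have h1 := hA i (by omega)
              have h2 := hB j (by omega)
              linarith
            · have h1 := hA j (by omega)
              have h2 := hB i (by omega)
              linarith
          rw [hcast, pow_succ (7 / 8 : ℝ), pow_succ (2 : ℝ)]
          nlinarith
      · intro l hl
        rw [pow_succ]
        rcases Nat.lt_or_ge l (k + 1) with h | h
        · have := hC l (by omega)
          omega
        · obtain rfl : l = k + 1 := by omega
          rw [hij]
          have h1 := hC i (by omega)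
          have h2 := hC j (by omega)
          have h3 := bw_add_le (a i) (a j)
          omega

theorem chain_bound {c : List ℕ} {n r : ℕ} (hc : IsAdditionChainFor c n)
    (hr : c.length = r + 1) :
    ∃ N : ℕ, (n : ℝ) ≤ 2 ^ r * (7 / 8 : ℝ) ^ N ∧ binaryWeight n ≤ 2 ^ N := by
  obtain ⟨⟨h0, hs⟩, hl⟩ := hc
  obtain ⟨_, N, _, _, h1, h2⟩ := chain_aux (fun i => c.getD i 0) r h0
    (fun k hk hk' => hs k hk (by omega)) r le_rfl
  rw [hr, Nat.add_sub_cancel] at hl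
  refine ⟨N, ?_, ?_⟩
  · have := h1 r le_rfl
    simp only [hl] at this
    exact this
  · have := h2 r le_rfl
    simp only [hl] at this
    exact this

theorem chainLength_spec {A : Set (List ℕ)} (hA : Admissible A) {n : ℕ} (hn : 0 < n) :
    (∃ N : ℕ, (n : ℝ) ≤ 2 ^ (chainLength A n) * (7 / 8 : ℝ) ^ N ∧ binaryWeight n ≤ 2 ^ N) ∧
    chainLength A n + 1 ≤ Nat.log 2 n + binaryWeight n := by
  obtain ⟨c, hcA, hc, hlen⟩ := hA.1 n hn
  have hpos : 0 < c.length := by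
    by_contra h
    have : c = [] := List.eq_nil_of_length_eq_zero (by omega)
    have h1 := hc.1.1
    simp [this] at h1
  have hmem : c.length - 1 ∈ {r | ∃ c ∈ A, IsAdditionChainFor c n ∧ c.length = r + 1} :=
    ⟨c, hcA, hc, by omega⟩
  refine ⟨?_, ?_⟩
  · obtain ⟨c', _, hc', hl'⟩ := Nat.sInf_mem ⟨_, hmem⟩
    exact chain_bound hc' hl'
  · have := Nat.sInf_le hmem
    unfold chainLength
    omega

theorem le_two_pow_chainLength {A : Set (List ℕ)} (hA : Admissible A) {n : ℕ} (hn : 0 < n) :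
    n ≤ 2 ^ chainLength A n := by
  obtain ⟨⟨N, h, _⟩, _⟩ := chainLength_spec hA hn
  have h1 : (7 / 8 : ℝ) ^ N ≤ 1 := pow_le_one₀ (by norm_num) (by norm_num)
  have h2 : (n : ℝ) ≤ 2 ^ chainLength A n := by
    refine h.trans ?_
    have : (0 : ℝ) < 2 ^ chainLength A n := by positivity
    nlinarith
  exact_mod_cast h2

theorem exists_stable {A : Set (List ℕ)} (hA : Admissible A) {n : ℕ} (hn : 0 < n) :
    ∃ j, AStable A (2 ^ j * n) := by
  have hpos : ∀ j, 0 < 2 ^ j * n := fun j => by positivity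
  have hge : ∀ j, j ≤ chainLength A (2 ^ j * n) := by
    intro j
    have h := le_two_pow_chainLength hA (hpos j)
    have h2 : 2 ^ j ≤ 2 ^ chainLength A (2 ^ j * n) :=
      (Nat.le_mul_of_pos_right _ hn).trans h
    exact (Nat.pow_le_pow_iff_right (by norm_num)).1 h2
  obtain ⟨j, hj⟩ : ∃ j, ∀ i, chainLength A (2 ^ j * n) - j ≤ chainLength A (2 ^ i * n) - i := by
    have hne : (Set.range fun i => chainLength A (2 ^ i * n) - i).Nonempty := Set.range_nonempty _
    obtain ⟨j, hj⟩ := Nat.sInf_mem hne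
    refine ⟨j, fun i => ?_⟩
    have := Nat.sInf_le (Set.mem_range_self (f := fun i => chainLength A (2 ^ i * n) - i) i)
    rw [← hj] at this
    exact this
  refine ⟨j, fun k => ?_⟩
  have hup : ∀ k, chainLength A (2 ^ k * (2 ^ j * n)) ≤ chainLength A (2 ^ j * n) + k := by
    intro k
    induction k with
    | zero => simp
    | succ k ih =>
      have := hA.2 (2 ^ k * (2 ^ j * n)) (by positivity)
      rw [pow_succ', mul_assoc]
      omega
  have h1 := hup k
  have h2 := hj (k + j)
  have h3 := hge (k + j)
  have h4 := hge j
  rw [pow_add, mul_assoc] at h2 h3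
  omega

/-! ### A combinatorial version of order type at least `ω ^ k` -/

/-- `Big k S` says that `S` contains a copy of `ω ^ k`. -/
def Big : ℕ → Set ℝ → Prop
  | 0, S => S.Nonempty
  | k + 1, S => ∃ T : ℕ → Set ℝ, (∀ i, T i ⊆ S ∧ Big k (T i)) ∧
      ∀ i j, i < j → ∀ x ∈ T i, ∀ y ∈ T j, x < y

theorem Big.mono {k : ℕ} {S S' : Set ℝ} (h : Big k S) (hS : S ⊆ S') : Big k S' := by
  cases k with
  | zero => exact Set.Nonempty.mono hS h
  | succ k =>
    obtain ⟨T, h1, h2⟩ := h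
    exact ⟨T, fun i => ⟨(h1 i).1.trans hS, (h1 i).2⟩, h2⟩

theorem Big.nonempty {k : ℕ} {S : Set ℝ} (h : Big k S) : S.Nonempty := by
  induction k generalizing S with
  | zero => exact h
  | succ k ih =>
    obtain ⟨T, h1, h2⟩ := h
    exact (ih (h1 0).2).mono (h1 0).1

theorem Big.image {k : ℕ} {S : Set ℝ} (h : Big k S) {f : ℝ → ℝ} (hf : StrictMonoOn f S) :
    Big k (f '' S) := by
  induction k generalizing S with
  | zero => exact Set.Nonempty.image f h
  | succ k ih =>
    obtain ⟨T, h1, h2⟩ := h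
    refine ⟨fun i => f '' T i, fun i => ⟨Set.image_mono (h1 i).1, ih (h1 i).2 (hf.mono (h1 i).1)⟩,
      ?_⟩
    rintro i j hij _ ⟨x, hx, rfl⟩ _ ⟨y, hy, rfl⟩
    exact hf ((h1 i).1 hx) ((h1 j).1 hy) (h2 i j hij x hx y hy)

theorem Big.of_infinite {k : ℕ} {A : Set ℝ} {T : ℕ → Set ℝ}
    (h2 : ∀ i j, i < j → ∀ x ∈ T i, ∀ y ∈ T j, x < y)
    (hinf : {i | Big k (T i ∩ A)}.Infinite) : Big (k + 1) A := by
  have hmem : ∀ i, Nat.nth (fun i => Big k (T i ∩ A)) i ∈ {i | Big k (T i ∩ A)} :=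
    fun i => Nat.nth_mem_of_infinite hinf i
  refine ⟨fun i => T (Nat.nth (fun i => Big k (T i ∩ A)) i) ∩ A, fun i =>
    ⟨Set.inter_subset_right, hmem i⟩, ?_⟩
  intro i j hij x hx y hy
  exact h2 _ _ (Nat.nth_strictMono hinf hij) x hx.1 y hy.1

theorem Big.union {k : ℕ} {A B : Set ℝ} (h : Big k (A ∪ B)) : Big k A ∨ Big k B := by
  induction k generalizing A B with
  | zero => exact Set.union_nonempty.1 h
  | succ k ih =>
    obtain ⟨T, h1, h2⟩ := h
    have hor : ∀ i, Big k (T i ∩ A) ∨ Big k (T i ∩ B) := by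
      intro i
      apply ih
      rw [← Set.inter_union_distrib_left, Set.inter_eq_left.2 (h1 i).1]
      exact (h1 i).2
    have huniv : {i | Big k (T i ∩ A)} ∪ {i | Big k (T i ∩ B)} = Set.univ :=
      Set.eq_univ_of_forall hor
    have : ({i | Big k (T i ∩ A)} ∪ {i | Big k (T i ∩ B)}).Infinite := by
      rw [huniv]; exact Set.infinite_univ
    rcases Set.infinite_union.1 this with h | h
    · exact Or.inl (Big.of_infinite h2 h)
    · exact Or.inr (Big.of_infinite h2 h)

theorem Big.biUnion {k n : ℕ} {A : ℕ → Set ℝ} {S : Set ℝ} (h : Big k S)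
    (hS : ∀ x ∈ S, ∃ i, i < n ∧ x ∈ A i) : ∃ i, i < n ∧ Big k (A i) := by
  induction n generalizing S with
  | zero =>
    obtain ⟨x, hx⟩ := h.nonempty
    obtain ⟨i, hi, _⟩ := hS x hx
    omega
  | succ n ih =>
    have h' : Big k ((S ∩ {x | ∃ i, i < n ∧ x ∈ A i}) ∪ A n) := by
      refine h.mono fun x hx => ?_
      obtain ⟨i, hi, hxi⟩ := hS x hx
      rcases Nat.lt_or_ge i n with hin | hin
      · exact Or.inl ⟨hx, i, hin, hxi⟩
      · obtain rfl : i = n := by omega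
        exact Or.inr hxi
    rcases h'.union with h1 | h1
    · obtain ⟨i, hi, hb⟩ := ih h1 (fun x hx => hx.2)
      exact ⟨i, by omega, hb⟩
    · exact ⟨n, by omega, h1⟩

open Ordinal in
theorem Big.of_ordinal {k : ℕ} {S : Set ℝ} (f : Ordinal.{0} → ℝ)
    (hf : StrictMonoOn f (Set.Iio (ω ^ k))) (hS : ∀ a < ω ^ k, f a ∈ S) : Big k S := by
  induction k generalizing S f with
  | zero => exact ⟨f 0, hS 0 (by simp)⟩
  | succ k ih =>
    have hlt : ∀ (i : ℕ) (a : Ordinal.{0}), a < ω ^ k → ω ^ k * i + a < ω ^ (k + 1) := by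
      intro i a ha
      calc ω ^ k * i + a < ω ^ k * i + ω ^ k := by simpa using ha
        _ = ω ^ k * (i + 1 : ℕ) := by push_cast; rw [mul_add, mul_one]
        _ ≤ ω ^ k * ω := mul_le_mul_right (natCast_lt_omega0 _).le _
        _ = ω ^ (k + 1) := (pow_succ _ _).symm
    refine ⟨fun i => (fun a => f (ω ^ k * i + a)) '' Set.Iio (ω ^ k), fun i => ⟨?_, ?_⟩, ?_⟩
    · rintro _ ⟨a, ha, rfl⟩
      exact hS _ (hlt i a ha)
    · refine ih (fun a => f (ω ^ k * i + a)) ?_ (fun a ha => ⟨a, ha, rfl⟩)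
      intro a ha b hb hab
      exact hf (hlt i a ha) (hlt i b hb) (by simpa using hab)
    · rintro i j hij _ ⟨a, ha, rfl⟩ _ ⟨b, hb, rfl⟩
      refine hf (hlt i a ha) (hlt j b hb) ?_
      calc ω ^ k * i + a < ω ^ k * i + ω ^ k := by simpa using ha
        _ = ω ^ k * (i + 1 : ℕ) := by push_cast; rw [mul_add, mul_one]
        _ ≤ ω ^ k * j := mul_le_mul_right (by exact_mod_cast hij) _
        _ ≤ _ := le_self_add

open Ordinal in
theorem Big.to_ordinal {k : ℕ} {S : Set ℝ} (h : Big k S) :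
    ∃ f : Ordinal.{0} → ℝ, StrictMonoOn f (Set.Iio (ω ^ k)) ∧ ∀ a < ω ^ k, f a ∈ S := by
  induction k generalizing S with
  | zero =>
    obtain ⟨x, hx⟩ := h
    refine ⟨fun _ => x, ?_, fun _ _ => hx⟩
    intro a ha b hb hab
    have hb' : b < 1 := by simpa using hb
    rw [Order.lt_one_iff] at hb'
    subst hb'
    exact absurd hab (by simp)
  | succ k ih =>
    obtain ⟨T, h1, h2⟩ := h
    choose f hf hfT using fun i => ih (h1 i).2
    have h0 : (ω : Ordinal.{0}) ^ k ≠ 0 := pow_ne_zero _ omega0_ne_zero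
    have hdiv : ∀ a : Ordinal.{0}, a < ω ^ (k + 1) → ∃ n : ℕ, a / ω ^ k = n := by
      intro a ha
      rw [pow_succ, Ordinal.lt_mul_iff_div_lt h0] at ha
      exact lt_omega0.1 ha
    choose! n hn using hdiv
    refine ⟨fun a => f (n a) (a % ω ^ k), ?_, ?_⟩
    · intro a ha b hb hab
      have hle : a / ω ^ k ≤ b / ω ^ k := by
        rw [← Ordinal.mul_le_iff_le_div h0]
        exact (Ordinal.mul_div_le _ _).trans hab.le
      rcases hle.lt_or_eq with hl | he
      · have : n a < n b := by
          rw [hn a ha, hn b hb] at hl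
          exact_mod_cast hl
        exact h2 _ _ this _ (hfT _ _ (Ordinal.mod_lt _ h0)) _ (hfT _ _ (Ordinal.mod_lt _ h0))
      · have hnn : n a = n b := by
          rw [hn a ha, hn b hb] at he
          exact_mod_cast he
        show f (n a) _ < f (n b) _
        rw [hnn]
        refine hf _ (Ordinal.mod_lt _ h0) (Ordinal.mod_lt _ h0) ?_
        rw [← Ordinal.div_add_mod a (ω ^ k), ← Ordinal.div_add_mod b (ω ^ k), he] at hab
        simpa using hab
    · intro a ha
      exact (h1 _).1 (hfT _ _ (Ordinal.mod_lt _ h0))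

open Ordinal in
theorem Big.le_type {k : ℕ} {S : Set ℝ} (h : Big k S) [WellFoundedLT S] :
    ω ^ k ≤ Ordinal.type ((· < ·) : S → S → Prop) := by
  obtain ⟨f, hf, hS⟩ := h.to_ordinal
  rw [← Ordinal.type_toType (ω ^ k), Ordinal.type_le_iff']
  have hlt : ∀ x : (ω ^ k : Ordinal.{0}).ToType,
      typein (α := (ω ^ k : Ordinal.{0}).ToType) (· < ·) x < ω ^ k := fun x => typein_lt_self x
  refine ⟨RelEmbedding.ofMonotone (fun x => ⟨f (typein (α := (ω ^ k : Ordinal.{0}).ToType) (· < ·) x), hS _ (hlt x)⟩) ?_⟩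
  intro x y hxy
  exact hf (hlt x) (hlt y) ((typein_lt_typein _).2 hxy)

open Ordinal in
theorem Big.of_lt_type {S : Set ℝ} [WellFoundedLT S]
    (h : ω ^ ω < Ordinal.type ((· < ·) : S → S → Prop)) :
    ∃ d ∈ S, ∀ k, Big k (S ∩ Set.Iio d) := by
  refine ⟨enum ((· < ·) : S → S → Prop) ⟨_, h⟩, Subtype.coe_prop _, fun k => ?_⟩
  have hk : (ω : Ordinal.{0}) ^ k < ω ^ ω := by
    rw [← opow_natCast]
    exact (Ordinal.opow_lt_opow_iff_right one_lt_omega0).2 (natCast_lt_omega0 k)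
  classical
  refine Big.of_ordinal (fun a => if ha : a < Ordinal.type ((· < ·) : S → S → Prop) then
    (enum ((· < ·) : S → S → Prop) ⟨a, ha⟩ : S) else 0) ?_ ?_
  · intro a ha b hb hab
    have ha' := (lt_trans ha hk).trans h
    have hb' := (lt_trans hb hk).trans h
    simp only [ha', hb', dif_pos]
    have := (enum_lt_enum (r := ((· < ·) : S → S → Prop)) (o₁ := ⟨a, ha'⟩) (o₂ := ⟨b, hb'⟩)).2 hab
    exact this
  · intro a ha
    have ha' := (lt_trans ha hk).trans h
    simp only [ha', dif_pos]
    refine ⟨Subtype.coe_prop _, ?_⟩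
    have := (enum_lt_enum (r := ((· < ·) : S → S → Prop)) (o₁ := ⟨a, ha'⟩) (o₂ := ⟨_, h⟩)).2
      (show a < ω ^ ω from lt_trans ha hk)
    exact this

open Ordinal in
theorem orderType_eq {S : Set ℝ} (hS : S.IsWF) (hlow : ∀ k, Big k S)
    (hup : ∀ d, ∃ k, ¬ Big k (S ∩ Set.Iio d)) : setOrderType S = ω ^ ω := by
  unfold setOrderType
  rw [dif_pos hS]
  have : WellFoundedLT S := ⟨hS⟩
  apply le_antisymm
  · by_contra hcon
    obtain ⟨d, _, hd⟩ := Big.of_lt_type (not_le.1 hcon)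
    obtain ⟨k, hk⟩ := hup d
    exact hk (hd k)
  · rw [opow_le_of_isSuccLimit omega0_ne_zero isSuccLimit_omega0]
    intro b hb
    obtain ⟨n, rfl⟩ := lt_omega0.1 hb
    rw [opow_natCast]
    exact (hlow n).le_type

/-! ### The sets of (negated) dyadic fractions of bounded binary weight -/

/-- Negated dyadic fractions in `[0, 1]` of binary weight at most `K`. -/
def dyad (K : ℕ) : Set ℝ :=
  {x | ∃ n l : ℕ, n ≤ 2 ^ l ∧ binaryWeight n ≤ K ∧ x = -((n : ℝ) / 2 ^ l)}

theorem dyad_nonpos {K : ℕ} {x : ℝ} (hx : x ∈ dyad K) : x ≤ 0 := by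
  obtain ⟨n, l, _, _, rfl⟩ := hx
  have : (0 : ℝ) ≤ (n : ℝ) / 2 ^ l := by positivity
  linarith

theorem dyad_zero {x : ℝ} (hx : x ∈ dyad 0) : x = 0 := by
  obtain ⟨n, l, _, h, rfl⟩ := hx
  rcases Nat.eq_zero_or_pos n with h0 | h0
  · simp [h0]
  · obtain ⟨a, t, _, _, h3⟩ := exists_top n h0
    omega

theorem dyad_succ {K : ℕ} {x : ℝ} (hx : x ∈ dyad (K + 1)) :
    x = 0 ∨ ∃ b : ℕ, ∃ y ∈ dyad K, x = -(1 / 2 : ℝ) ^ b + y ∧ -x ≤ 2 * (1 / 2 : ℝ) ^ b := by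
  obtain ⟨n, l, hnl, h, rfl⟩ := hx
  rcases Nat.eq_zero_or_pos n with h0 | h0
  · left; simp [h0]
  · right
    obtain ⟨a, t, h1, h2, h3⟩ := exists_top n h0
    have hal : a ≤ l := (Nat.pow_le_pow_iff_right (a := 2) (by norm_num)).1 (by omega)
    obtain ⟨b, rfl⟩ := Nat.exists_eq_add_of_le hal
    have e1 : (1 / 2 : ℝ) ^ b = 2 ^ a / 2 ^ (a + b) := by
      rw [pow_add, one_div, inv_pow]; field_simp
    have e2 : (n : ℝ) = 2 ^ a + t := by rw [h1]; push_cast; ring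
    refine ⟨b, -((t : ℝ) / 2 ^ (a + b)), ⟨t, a + b, by omega, by omega, rfl⟩, ?_, ?_⟩
    · rw [e1, e2]; ring
    · have h2' : (t : ℝ) ≤ 2 ^ a := by exact_mod_cast h2.le
      rw [neg_neg, e1, e2, mul_div_assoc']
      gcongr
      linarith

theorem dyad_isPWO (K : ℕ) : (dyad K).IsPWO := by
  induction K with
  | zero => exact (Set.isPWO_singleton (0 : ℝ)).mono fun x hx => dyad_zero hx
  | succ K ih =>
    have hP : (Set.range fun b : ℕ => -(1 / 2 : ℝ) ^ b).IsPWO := by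
      rw [← Set.image_univ]
      apply Set.IsPWO.image_of_monotone (Set.IsWF.isPWO (Set.isWF_univ_iff.2 inferInstance))
      intro a b hab
      exact neg_le_neg (pow_le_pow_of_le_one (by norm_num) (by norm_num) hab)
    refine ((Set.isPWO_singleton (0 : ℝ)).union (hP.add ih)).mono fun x hx => ?_
    rcases dyad_succ hx with h | ⟨b, y, hy, h, _⟩
    · exact Or.inl h
    · exact Or.inr ⟨_, ⟨b, rfl⟩, y, hy, h.symm⟩

theorem dyad_not_big (K : ℕ) : ¬ Big (K + 1) (dyad K) := by
  induction K with
  | zero =>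
    rintro ⟨T, h1, h2⟩
    obtain ⟨x, hx⟩ := (h1 0).2.nonempty
    obtain ⟨y, hy⟩ := (h1 1).2.nonempty
    have := h2 0 1 (by norm_num) x hx y hy
    rw [dyad_zero ((h1 0).1 hx), dyad_zero ((h1 1).1 hy)] at this
    exact lt_irrefl _ this
  | succ K ih =>
    rintro ⟨T, h1, h2⟩
    obtain ⟨y, hy⟩ := (h1 1).2.nonempty
    obtain ⟨z, hz⟩ := (h1 2).2.nonempty
    have hyz := h2 1 2 (by norm_num) y hy z hz
    have hz0 := dyad_nonpos ((h1 2).1 hz)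
    obtain ⟨B, hB⟩ := exists_pow_lt_of_lt_one (show (0 : ℝ) < -y / 2 by linarith)
      (show (1 / 2 : ℝ) < 1 by norm_num)
    obtain ⟨b, _, hb⟩ := (h1 0).2.biUnion (n := B)
      (A := fun b => (fun u => -(1 / 2 : ℝ) ^ b + u) '' dyad K) (by
        intro x hx
        have hxy := h2 0 1 (by norm_num) x hx y hy
        rcases dyad_succ ((h1 0).1 hx) with h | ⟨b, u, hu, h, hle⟩
        · linarith
        · refine ⟨b, ?_, u, hu, h.symm⟩
          by_contra hcon
          have : (1 / 2 : ℝ) ^ b ≤ (1 / 2 : ℝ) ^ B :=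
            pow_le_pow_of_le_one (by norm_num) (by norm_num) (not_lt.1 hcon)
          linarith)
    have hb2 := hb.image (f := fun u => (1 / 2 : ℝ) ^ b + u)
      (fun p _ q _ hpq => by simpa using hpq)
    apply ih
    refine hb2.mono ?_
    rintro _ ⟨_, ⟨u, hu, rfl⟩, rfl⟩
    simpa using hu

/-- Negated dyadic fractions in `[0, 1)` of binary weight at most `K`. -/
def dyadLt (K : ℕ) : Set ℝ :=
  {x | ∃ t j : ℕ, t < 2 ^ j ∧ binaryWeight t ≤ K ∧ x = -((t : ℝ) / 2 ^ j)}

theorem dyadLt_big (K : ℕ) : Big K (dyadLt K) := by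
  induction K with
  | zero => exact ⟨0, 0, 0, by norm_num, by simp [bw_zero], by simp⟩
  | succ K ih =>
    refine ⟨fun i => (fun x => (1 / 2 : ℝ) ^ (i + 1) * (x - 1)) '' dyadLt K,
      fun i => ⟨?_, ?_⟩, ?_⟩
    · rintro _ ⟨_, ⟨t, j, h1, h2, rfl⟩, rfl⟩
      refine ⟨2 ^ j + t, j + (i + 1), ?_, ?_, ?_⟩
      · have : 2 ^ j * 2 ≤ 2 ^ j * 2 ^ (i + 1) :=
          Nat.mul_le_mul_left _ (by rw [pow_succ]; have := Nat.one_le_two_pow (n := i); omega)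
        rw [pow_add 2 j]
        omega
      · have := bw_add_le (2 ^ j) t
        rw [bw_two_pow] at this
        omega
      · push_cast
        rw [pow_add 2 j, one_div, inv_pow]
        field_simp
        ring
    · refine ih.image fun p _ q _ hpq => ?_
      have : (0 : ℝ) < (1 / 2 : ℝ) ^ (i + 1) := by positivity
      show (1 / 2 : ℝ) ^ (i + 1) * (p - 1) < (1 / 2 : ℝ) ^ (i + 1) * (q - 1)
      gcongr
    · rintro i i' hi _ ⟨_, ⟨t, j, h1, h2, rfl⟩, rfl⟩ _ ⟨_, ⟨t', j', h1', h2', rfl⟩, rfl⟩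
      have hfrac : (t' : ℝ) / 2 ^ j' < 1 := by
        rw [div_lt_one (by positivity)]; exact_mod_cast h1'
      have hfrac0 : (0 : ℝ) ≤ (t : ℝ) / 2 ^ j := by positivity
      have hp : (1 / 2 : ℝ) ^ (i' + 1) ≤ (1 / 2 : ℝ) ^ (i + 1 + 1) :=
        pow_le_pow_of_le_one (by norm_num) (by norm_num) (by omega)
      rw [pow_succ _ (i + 1)] at hp
      have hpos : (0 : ℝ) < (1 / 2 : ℝ) ^ (i + 1) := by positivity
      have hpos' : (0 : ℝ) < (1 / 2 : ℝ) ^ (i' + 1) := by positivity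
      show (1 / 2 : ℝ) ^ (i + 1) * (-((t : ℝ) / 2 ^ j) - 1) <
        (1 / 2 : ℝ) ^ (i' + 1) * (-((t' : ℝ) / 2 ^ j') - 1)
      nlinarith

/-! ### Defects -/

/-- The order isomorphism turning defects into negated dyadic fractions. -/
noncomputable def gmap (d : ℝ) : ℝ := -(2 : ℝ) ^ (-d)

theorem gmap_strictMono : StrictMono gmap := by
  intro a b hab
  exact neg_lt_neg (Real.rpow_lt_rpow_of_exponent_lt (by norm_num) (neg_lt_neg hab))

theorem gmap_defect (A : Set (List ℕ)) {n : ℕ} (hn : 0 < n) :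
    gmap (Adefect A n) = -((n : ℝ) / 2 ^ chainLength A n) := by
  unfold gmap Adefect
  rw [neg_sub, Real.rpow_sub (by norm_num), Real.rpow_logb (by norm_num) (by norm_num)
    (by exact_mod_cast hn), Real.rpow_natCast]

theorem defect_segment {A : Set (List ℕ)} (hA : Admissible A) (d : ℝ) :
    ∃ K, gmap '' (defectSet A ∩ Set.Iio d) ⊆ dyad K := by
  obtain ⟨M, hM⟩ := exists_pow_lt_of_lt_one (show (0 : ℝ) < (2 : ℝ) ^ (-d) by positivity)
      (show (7 / 8 : ℝ) < 1 by norm_num)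
  refine ⟨2 ^ M, ?_⟩
  rintro _ ⟨_, ⟨⟨n, hn, rfl⟩, hd⟩, rfl⟩
  have h1 := gmap_strictMono hd
  rw [gmap_defect A hn] at h1 ⊢
  refine ⟨n, _, le_two_pow_chainLength hA hn, ?_, rfl⟩
  obtain ⟨⟨N, h2, h3⟩, _⟩ := chainLength_spec hA hn
  refine h3.trans (Nat.pow_le_pow_right (by norm_num) ?_)
  by_contra hcon
  have h4 : (7 / 8 : ℝ) ^ N ≤ (7 / 8 : ℝ) ^ M :=
    pow_le_pow_of_le_one (by norm_num) (by norm_num) (by omega)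
  have h5 : (n : ℝ) / 2 ^ chainLength A n ≤ (7 / 8 : ℝ) ^ N := by
    rw [div_le_iff₀ (by positivity), mul_comm]; exact h2
  unfold gmap at h1
  linarith

theorem defectSet_isWF {A : Set (List ℕ)} (hA : Admissible A) : (defectSet A).IsWF := by
  rw [Set.isWF_iff_no_descending_seq]
  intro f hf hmem
  obtain ⟨K, hK⟩ := defect_segment hA (f 0 + 1)
  have hwf := (dyad_isPWO K).isWF
  rw [Set.isWF_iff_no_descending_seq] at hwf
  refine hwf (fun i => gmap (f i)) (fun i j hij => gmap_strictMono (hf hij)) ?_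
  intro i
  refine hK ⟨f i, ⟨hmem i, ?_⟩, rfl⟩
  have := hf.antitone (Nat.zero_le i)
  show f i < f 0 + 1
  linarith

theorem defectSet_not_big {A : Set (List ℕ)} (hA : Admissible A) (d : ℝ) :
    ∃ k, ¬ Big k (defectSet A ∩ Set.Iio d) := by
  obtain ⟨K, hK⟩ := defect_segment hA d
  exact ⟨K + 1, fun h => dyad_not_big K ((h.image (gmap_strictMono.strictMonoOn _)).mono hK)⟩

theorem stable_subset (A : Set (List ℕ)) : stableDefectSet A ⊆ defectSet A := by
  rintro _ ⟨n, hn, _, rfl⟩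
  exact ⟨n, hn, rfl⟩

theorem stable_big {A : Set (List ℕ)} (hA : Admissible A) (k : ℕ) :
    Big k (stableDefectSet A) := by
  have h1 : Big k ((fun x => x - 1) '' dyadLt k) :=
    (dyadLt_big k).image (fun p _ q _ hpq => by simpa using hpq)
  obtain ⟨s, _, hs⟩ := h1.biUnion (n := k + 1)
    (A := fun s => (fun d => 2 ^ s * gmap d) '' stableDefectSet A) (by
      rintro _ ⟨_, ⟨t, j, ht, hw, rfl⟩, rfl⟩
      have hn : 0 < 2 ^ j + t := by positivity
      obtain ⟨e, he⟩ := exists_stable hA hn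
      have hm : 0 < 2 ^ e * (2 ^ j + t) := by positivity
      have hlog : Nat.log 2 (2 ^ e * (2 ^ j + t)) = e + j := by
        apply Nat.log_eq_of_pow_le_of_lt_pow
        · rw [pow_add]
          exact Nat.mul_le_mul_left _ (by omega)
        · rw [add_assoc, pow_add 2 e]
          apply Nat.mul_lt_mul_of_pos_left _ (by positivity)
          rw [pow_succ]; omega
      have hwt : binaryWeight (2 ^ e * (2 ^ j + t)) ≤ k + 1 := by
        rw [bw_two_pow_mul]
        have := bw_add_le (2 ^ j) t
        rw [bw_two_pow] at this
        omega
      have hup := (chainLength_spec hA hm).2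
      have hlo : e + j ≤ chainLength A (2 ^ e * (2 ^ j + t)) := by
        have h := le_two_pow_chainLength hA hm
        rw [← Nat.pow_le_pow_iff_right (a := 2) (by norm_num)]
        refine le_trans ?_ h
        rw [pow_add]
        exact Nat.mul_le_mul_left _ (by omega)
      obtain ⟨s, hs⟩ := Nat.exists_eq_add_of_le hlo
      refine ⟨s, by omega, _, ⟨_, hm, he, rfl⟩, ?_⟩
      show 2 ^ s * gmap _ = _
      rw [gmap_defect A hm, hs]
      push_cast
      rw [pow_add, pow_add]
      field_simp
      ring)
  have hinv : ∀ d : ℝ, -Real.logb 2 (-(2 ^ s * gmap d / 2 ^ s)) = d := by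
    intro d
    rw [mul_div_cancel_left₀ _ (by positivity)]
    unfold gmap
    rw [neg_neg, Real.logb_rpow (by norm_num) (by norm_num), neg_neg]
  have h2 := hs.image (f := fun x => -Real.logb 2 (-(x / 2 ^ s))) (by
    rintro _ ⟨p, _, rfl⟩ _ ⟨q, _, rfl⟩ hpq
    show -Real.logb 2 (-(2 ^ s * gmap p / 2 ^ s)) < -Real.logb 2 (-(2 ^ s * gmap q / 2 ^ s))
    rw [hinv, hinv]
    have : gmap p < gmap q := lt_of_mul_lt_mul_left hpq (by positivity)
    exact gmap_strictMono.lt_iff_lt.1 this)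
  refine h2.mono ?_
  rintro _ ⟨_, ⟨p, hp, rfl⟩, rfl⟩
  show -Real.logb 2 (-(2 ^ s * gmap p / 2 ^ s)) ∈ _
  rw [hinv]
  exact hp

/-- For any admissible set `A` of addition chains, both `𝒟^A` and `𝒟^A_st` are
well-ordered subsets of `ℝ` of order type exactly `ω ^ ω`. -/
theorem Adefect_set_wellOrdered_orderType_omega_pow_omega
    (A : Set (List ℕ)) (hA : Admissible A) :
    (defectSet A).IsWF ∧ setOrderType (defectSet A) = Ordinal.omega0 ^ Ordinal.omega0 ∧
    (stableDefectSet A).IsWF ∧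
      setOrderType (stableDefectSet A) = Ordinal.omega0 ^ Ordinal.omega0 := by
  have hst := stable_subset A
  have hwf := defectSet_isWF hA
  have hwf' : (stableDefectSet A).IsWF := hwf.mono hst
  refine ⟨hwf, orderType_eq hwf (fun k => (stable_big hA k).mono hst) (defectSet_not_big hA),
    hwf', orderType_eq hwf' (stable_big hA) fun d => ?_⟩
  obtain ⟨k, hk⟩ := defectSet_not_big hA d
  exact ⟨k, fun h => hk (h.mono (Set.inter_subset_inter_left _ hst))⟩
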